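/- Let d ≥ 2 and n ≥ 1 be integers, let c > 0, t > 0, and let α = (α_1,…,α_d) ∈ ℝ^d be nonzero with Euclidean norm ‖α‖. With τ_{n+1} := t − (τ_1+⋯+τ_n), the quantity F_n^1(α) := ( Γ((n+1)(d+1)) / ( Γ(d+1)^{n+1} · t^{(n+1)(d+1)−1} ) ) · ( 2^{d/2} Γ(1+d/2) )^{n+1} · ∫₀^t dτ_1 ∫₀^{t−τ_1} dτ_2 ⋯ ∫₀^{t−(τ_1+⋯+τ_{n−1})} dτ_n of ∏_{k=1}^{n+1} τ_k^d · ( J_{d/2}(c τ_k ‖α‖)/(c τ_k ‖α‖)^{d/2} − (α_d²/‖α‖²) · J_{d/2+1}(c τ_k ‖α‖)/(c τ_k ‖α‖)^{d/2−1} ) equals ( √π · Γ((n+1)(d+1)) / 2^{((d+1)(n+1)−1)/2} ) · ∑_{j=0}^{n+1} (−1)^{n+1−j} · binom(n+1, j) · ( (α_d²/‖α‖²)·(d+1)/2 )^{n+1−j} / Γ( (n+1)(d+3)/2 − j ) · J_{((n+1)(d+3)−(2j+1))/2}(c t ‖α‖) / (c t ‖α‖)^{((n+1)(d−1)+2j−1)/2}.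 -/

import Mathlib

/-!
The simplex integral is the `(n + 1)`-fold convolution at time `t` of the single function
`f(τ) = τ ^ d * (J_{d/2}(bτ) / (bτ) ^ (d/2) - a * J_{d/2+1}(bτ) / (bτ) ^ (d/2-1))`, where
`b = c ‖α‖` and `a = α_d² / ‖α‖²`, so it becomes an `(n + 1)`-st power after a Laplace transform.
Classically `τ ^ ν J_ν(bτ)` has transform proportional to `(p² + b²) ^ (-(ν + 1/2))`; hence the
transform of `f` is a combination of `(p² + b²) ^ (-(d+1)/2)` and `(p² + b²) ^ (-(d+3)/2)`, its
power expands by the binomial theorem, and each term of the expansion is again the transform of a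
Bessel function.

To avoid inverting an analytic transform, the argument is carried out in formal power series in
`X = 1/p`: `invLaplace` sends `X ^ (m + 1)` to `t ^ m / m!`, and on series with geometrically
bounded coefficients (`GeomBdd`) and zero constant term it turns products into convolutions
(`convolution_invLaplace`, which integrates a double series termwise with the Beta integral).
Combined with a Fubini recursion for the simplex integral (`simplexInt_succ`), this gives
`simplexInt_invLaplace`. The series `symbolPow b k` stands for `(p² + b²) ^ (-k/2)`, which is
multiplicative in `k` by the Vandermonde identity for binomial series, and
`besselJ_half_eq_invLaplace` identifies its image through Legendre's duplication formula.
-/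

open MeasureTheory Finset

/-- Bessel function of the first kind of order `μ`. -/
noncomputable def besselJ (μ : ℝ) (x : ℝ) : ℝ :=
  ∑' k : ℕ, (-1 : ℝ) ^ k / (k.factorial * Real.Gamma (k + μ + 1)) * (x / 2) ^ (2 * (k : ℝ) + μ)

/-! ### Formal inverse Laplace transform -/

open PowerSeries in
/-- The inverse Laplace transform of `v` read as a series in `X = 1/p`, that is, the linear extension
of `X ^ (m + 1) ↦ t ^ m / m!`. The constant coefficient of `v` is ignored. -/
noncomputable def invLaplace (v : PowerSeries ℝ) (t : ℝ) : ℝ :=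
  ∑' m : ℕ, coeff (m + 1) v * (t ^ m / m.factorial)

/-- The coefficients of `v` grow at most geometrically, equivalently `v` converges near `0`. The
ratio is taken to be at least `1` so that its powers are monotone in the exponent. -/
def GeomBdd (v : PowerSeries ℝ) : Prop :=
  ∃ K R : ℝ, 0 ≤ K ∧ 1 ≤ R ∧ ∀ m, |PowerSeries.coeff m v| ≤ K * R ^ m

namespace GeomBdd
open PowerSeries
variable {v w : PowerSeries ℝ}

theorem add (hv : GeomBdd v) (hw : GeomBdd w) : GeomBdd (v + w) := by
  obtain ⟨K, R, hK, hR, h⟩ := hv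
  obtain ⟨K', R', hK', hR', h'⟩ := hw
  refine ⟨K + K', max R R', by positivity, le_max_of_le_left hR, fun m => ?_⟩
  rw [map_add, add_mul]
  refine (abs_add_le _ _).trans (add_le_add ((h m).trans ?_) ((h' m).trans ?_))
  · gcongr; exact le_max_left _ _
  · gcongr; exact le_max_right _ _

theorem C_mul (a : ℝ) (hv : GeomBdd v) : GeomBdd (C a * v) := by
  obtain ⟨K, R, hK, hR, h⟩ := hv
  refine ⟨|a| * K, R, by positivity, hR, fun m => ?_⟩
  rw [coeff_C_mul, abs_mul, mul_assoc]
  exact mul_le_mul_of_nonneg_left (h m) (abs_nonneg a)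

theorem mul (hv : GeomBdd v) (hw : GeomBdd w) : GeomBdd (v * w) := by
  obtain ⟨K, R, hK, hR, h⟩ := hv
  obtain ⟨K', R', hK', hR', h'⟩ := hw
  refine ⟨K * K', 2 * (R * R'), by positivity, by nlinarith, fun m => ?_⟩
  rw [coeff_mul]
  refine (abs_sum_le_sum_abs _ _).trans ?_
  have key : ∀ p ∈ antidiagonal m, |coeff p.1 v * coeff p.2 w| ≤ K * K' * (R * R') ^ m := by
    intro p hp
    have hp' := mem_antidiagonal.mp hp
    rw [abs_mul]
    calc _ ≤ (K * R ^ p.1) * (K' * R' ^ p.2) :=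
          mul_le_mul (h _) (h' _) (abs_nonneg _) (by positivity)
      _ ≤ (K * R ^ m) * (K' * R' ^ m) := by
          gcongr <;> omega
      _ = _ := by ring
  refine (sum_le_card_nsmul _ _ _ key).trans ?_
  rw [Nat.card_antidiagonal, nsmul_eq_mul, mul_pow 2]
  have : ((m + 1 : ℕ) : ℝ) ≤ 2 ^ m := by exact_mod_cast Nat.lt_two_pow_self
  calc _ ≤ 2 ^ m * (K * K' * (R * R') ^ m) := by gcongr
    _ = _ := by ring

theorem one : GeomBdd 1 := by
  refine ⟨1, 1, by norm_num, le_refl _, fun m => ?_⟩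
  rw [coeff_one]
  split_ifs <;> simp

theorem pow (hv : GeomBdd v) (k : ℕ) : GeomBdd (v ^ k) := by
  induction k with
  | zero => simpa using one
  | succ k ih => rw [pow_succ]; exact ih.mul hv

theorem sum {ι : Type*} (s : Finset ι) (f : ι → PowerSeries ℝ) (h : ∀ i ∈ s, GeomBdd (f i)) :
    GeomBdd (∑ i ∈ s, f i) := by
  classical
  induction s using Finset.induction_on with
  | empty => exact ⟨0, 1, le_rfl, le_rfl, by simp⟩
  | insert a s ha ih =>
    rw [sum_insert ha]
    exact (h a (mem_insert_self a s)).add (ih fun i hi => h i (mem_insert_of_mem hi))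

/-- Domination of the terms of `invLaplace v`, uniform for `|s| ≤ T`, by those of an exponential
series. -/
theorem bound (hv : GeomBdd v) : ∃ K R : ℝ, 0 ≤ K ∧ 0 ≤ R ∧ ∀ (m : ℕ) (s T : ℝ), |s| ≤ T →
    ‖coeff (m + 1) v * (s ^ m / m.factorial)‖ ≤ K * ((R * T) ^ m / m.factorial) := by
  obtain ⟨K, R, hK, hR, h⟩ := hv
  refine ⟨K * R, R, by positivity, by positivity, fun m s T hs => ?_⟩
  rw [norm_mul, norm_div, norm_pow, Real.norm_eq_abs, Real.norm_eq_abs, Real.norm_natCast]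
  calc _ ≤ (K * R ^ (m + 1)) * (T ^ m / m.factorial) := by gcongr; exact h _
    _ = _ := by rw [mul_pow]; ring

theorem summable_norm (hv : GeomBdd v) (s : ℝ) :
    Summable fun m : ℕ => ‖coeff (m + 1) v * (s ^ m / m.factorial)‖ := by
  obtain ⟨K, R, -, -, h⟩ := hv.bound
  exact Summable.of_nonneg_of_le (fun _ => norm_nonneg _) (fun m => h m s |s| le_rfl)
    ((Real.summable_pow_div_factorial _).mul_left K)

theorem continuous_invLaplace (hv : GeomBdd v) : Continuous (invLaplace v) := by
  obtain ⟨K, R, -, -, h⟩ := hv.bound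
  rw [continuous_iff_continuousAt]
  intro x
  have : ContinuousOn (invLaplace v) (Metric.ball 0 (|x| + 1)) := by
    refine continuousOn_tsum (u := fun m : ℕ => K * ((R * (|x| + 1)) ^ m / m.factorial))
      (fun m => by fun_prop) ((Real.summable_pow_div_factorial _).mul_left K) ?_
    intro m s hs
    exact h m s _ (by simpa using (mem_ball_zero_iff.mp hs).le)
  exact this.continuousAt (Metric.isOpen_ball.mem_nhds (by simp))

theorem invLaplace_add (hv : GeomBdd v) (hw : GeomBdd w) (t : ℝ) :
    invLaplace (v + w) t = invLaplace v t + invLaplace w t := by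
  unfold invLaplace
  rw [← (hv.summable_norm t).of_norm.tsum_add (hw.summable_norm t).of_norm]
  simp [add_mul]

theorem _root_.invLaplace_C_mul (a : ℝ) (v : PowerSeries ℝ) (t : ℝ) :
    invLaplace (C a * v) t = a * invLaplace v t := by
  unfold invLaplace
  rw [← tsum_mul_left]
  simp [mul_assoc]

theorem invLaplace_sum {ι : Type*} (s : Finset ι) (f : ι → PowerSeries ℝ)
    (h : ∀ i ∈ s, GeomBdd (f i)) (t : ℝ) :
    invLaplace (∑ i ∈ s, f i) t = ∑ i ∈ s, invLaplace (f i) t := by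
  classical
  induction s using Finset.induction_on with
  | empty => simp [invLaplace]
  | insert a s ha ih =>
    have h' := fun i hi => h i (mem_insert_of_mem hi)
    rw [sum_insert ha, sum_insert ha, invLaplace_add (h a (mem_insert_self a s)) (sum s f h'),
      ih h']

end GeomBdd

/-- The Beta integral at positive integers, by repeated integration by parts. -/
theorem integral_pow_div_factorial_mul (p q : ℕ) (t : ℝ) :
    ∫ s in (0 : ℝ)..t, (s ^ p / p.factorial) * ((t - s) ^ q / q.factorial) =
      t ^ (p + q + 1) / (p + q + 1).factorial := by
  have hd : ∀ (p : ℕ) (s : ℝ), HasDerivAt (fun s : ℝ => s ^ (p + 1) / (p + 1).factorial)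
      (s ^ p / p.factorial) s := by
    intro p s
    have h := (hasDerivAt_pow (p + 1) s).div_const ((p + 1).factorial : ℝ)
    have e : ((p + 1 : ℕ) : ℝ) * s ^ (p + 1 - 1) / ((p + 1).factorial : ℝ)
        = s ^ p / p.factorial := by
      rw [Nat.factorial_succ]
      push_cast
      field_simp
    rwa [e] at h
  induction q generalizing p with
  | zero =>
    have := intervalIntegral.integral_eq_sub_of_hasDerivAt (a := 0) (b := t)
      (fun s _ => hd p s) (by apply Continuous.intervalIntegrable; fun_prop)
    simpa using this
  | succ q ih =>
    have hu : ∀ s : ℝ, HasDerivAt (fun s : ℝ => (t - s) ^ (q + 1) / (q + 1).factorial)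
        (-((t - s) ^ q / q.factorial)) s := by
      intro s
      have := (hd q (t - s)).comp s ((hasDerivAt_id s).const_sub t)
      simpa [Function.comp_def] using! this
    have := intervalIntegral.integral_mul_deriv_eq_deriv_mul (a := 0) (b := t)
      (fun s _ => hu s) (fun s _ => hd p s)
      (by apply Continuous.intervalIntegrable; fun_prop)
      (by apply Continuous.intervalIntegrable; fun_prop)
    have h2 := ih (p + 1)
    simp only [mul_comm (_ / ((p : ℕ).factorial : ℝ))]
    rw [this]
    simp only [neg_mul, intervalIntegral.integral_neg]
    simp only [mul_comm (_ / ((p+1 : ℕ).factorial : ℝ))] at h2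
    rw [h2]
    simp
    congr 2 <;> (try congr 1) <;> omega

open PowerSeries in
/-- Products of series without constant term correspond to convolutions on `[0, t]`. -/
theorem convolution_invLaplace {v w : PowerSeries ℝ} (hv : GeomBdd v) (hw : GeomBdd w)
    (hv0 : constantCoeff v = 0) (hw0 : constantCoeff w = 0) {t : ℝ} (ht : 0 ≤ t) :
    ∫ s in (0 : ℝ)..t, invLaplace v s * invLaplace w (t - s) = invLaplace (v * w) t := by
  let F : ℕ × ℕ → C(ℝ, ℝ) := fun x => ⟨fun s =>
    (coeff (x.1 + 1) v * (s ^ x.1 / x.1.factorial)) *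
      (coeff (x.2 + 1) w * ((t - s) ^ x.2 / x.2.factorial)), by fun_prop⟩
  obtain ⟨K, R, hK, hR, hb⟩ := hv.bound
  obtain ⟨K', R', hK', hR', hb'⟩ := hw.bound
  have hs : Summable fun x : ℕ × ℕ =>
      ‖(F x).restrict (⟨Set.uIcc 0 t, isCompact_uIcc⟩ : TopologicalSpace.Compacts ℝ)‖ := by
    refine Summable.of_nonneg_of_le (fun _ => norm_nonneg _) (fun x => ?_)
      (((Real.summable_pow_div_factorial (R * t)).mul_left K).mul_of_nonneg
        ((Real.summable_pow_div_factorial (R' * t)).mul_left K')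
        (fun m => by positivity) (fun m => by positivity))
    refine (ContinuousMap.norm_le _ (by positivity)).mpr fun s => ?_
    have hs : s.1 ∈ Set.Icc 0 t := Set.uIcc_of_le ht ▸ s.2
    rw [ContinuousMap.restrict_apply, ContinuousMap.coe_mk, norm_mul]
    exact mul_le_mul (hb _ _ _ (abs_le.mpr ⟨by linarith [hs.1], hs.2⟩))
      (hb' _ _ _ (abs_le.mpr ⟨by linarith [hs.2], by linarith [hs.1]⟩))
      (norm_nonneg _) (by positivity)
  have H := intervalIntegral.hasSum_intervalIntegral_of_summable_norm hs
  have h1 : ∀ s, ∑' x, F x s = invLaplace v s * invLaplace w (t - s) := fun s =>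
    (tsum_mul_tsum_of_summable_norm (hv.summable_norm s) (hw.summable_norm (t - s))).symm
  have h2 : ∀ x, ∫ s in (0 : ℝ)..t, F x s = coeff (x.1 + 1) v * coeff (x.2 + 1) w *
      (t ^ (x.1 + x.2 + 1) / (x.1 + x.2 + 1).factorial) := by
    intro x
    rw [← integral_pow_div_factorial_mul, ← intervalIntegral.integral_const_mul]
    refine intervalIntegral.integral_congr fun s _ => ?_
    simp only [F, ContinuousMap.coe_mk]
    ring
  simp only [h1, h2] at H
  obtain ⟨v', rfl⟩ := X_dvd_iff.mpr hv0
  obtain ⟨w', rfl⟩ := X_dvd_iff.mpr hw0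
  simp only [coeff_succ_X_mul] at H
  have H' := (HasAntidiagonal.sigmaAntidiagonalEquivProd.hasSum_iff.mpr H).sigma
    (fun m => hasSum_fintype _)
  rw [← H'.tsum_eq]
  have hsum := ((hv.mul hw).summable_norm t).of_norm
  unfold invLaplace
  rw [hsum.tsum_eq_zero_add]
  have e : X * v' * (X * w') = X * (X * (v' * w')) := by ring
  rw [e]
  simp only [coeff_succ_X_mul, coeff_zero_X_mul, zero_mul, zero_add]
  congr 1
  ext m
  rw [coeff_mul, sum_mul, ← sum_coe_sort (antidiagonal m)]
  refine sum_congr rfl fun x _ => ?_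
  have := mem_antidiagonal.mp x.2
  simp only [Function.comp, HasAntidiagonal.sigmaAntidiagonalEquivProd_apply, this]

/-! ### Integrals over the simplex -/

/-- The open simplex over which the statement integrates. -/
def openSimplex (n : ℕ) (t : ℝ) : Set (Fin n → ℝ) := {τ | (∀ i, 0 < τ i) ∧ ∑ i, τ i < t}

/-- The integral of `f τ₁ ⋯ f τₙ₊₁` over the simplex, with `τₙ₊₁ = t - (τ₁ + ⋯ + τₙ)`; this is the
`(n + 1)`-fold convolution power of `f` at `t`. -/
noncomputable def simplexInt (f : ℝ → ℝ) (n : ℕ) (t : ℝ) : ℝ :=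
  ∫ τ in openSimplex n t,
    ∏ k, f ((Fin.snoc τ (t - ∑ i, τ i) : Fin (n + 1) → ℝ) k)

theorem measurableSet_openSimplex (n : ℕ) (t : ℝ) : MeasurableSet (openSimplex n t) := by
  unfold openSimplex
  measurability

theorem openSimplex_subset_Icc (n : ℕ) (t : ℝ) :
    openSimplex n t ⊆ Set.Icc 0 (fun _ => t) := by
  rintro τ ⟨h0, h1⟩
  refine ⟨fun i => (h0 i).le, fun i => ?_⟩
  exact (single_le_sum (fun j _ => (h0 j).le) (mem_univ i)).trans h1.le

theorem continuous_simplex_integrand {f : ℝ → ℝ} (hf : Continuous f) (n : ℕ) (t : ℝ) :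
    Continuous fun τ : Fin n → ℝ =>
      ∏ k, f ((Fin.snoc τ (t - ∑ i, τ i) : Fin (n + 1) → ℝ) k) := by
  simp only [Fin.prod_univ_castSucc, Fin.snoc_castSucc, Fin.snoc_last]
  fun_prop

theorem simplexInt_zero (f : ℝ → ℝ) {t : ℝ} (ht : 0 < t) : simplexInt f 0 t = f t := by
  have : openSimplex 0 t = Set.univ := by
    ext τ; simp [openSimplex, ht]
  simp [simplexInt, this, Fin.snoc, Measure.real, volume_pi]

/-- Splitting off the first step length by Fubini. -/
theorem simplexInt_succ {f : ℝ → ℝ} (hf : Continuous f) (n : ℕ) {t : ℝ} (ht : 0 < t) :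
    simplexInt f (n + 1) t = ∫ s in (0 : ℝ)..t, f s * simplexInt f n (t - s) := by
  let e : (Fin (n + 1) → ℝ) ≃ᵐ ℝ × (Fin n → ℝ) :=
    MeasurableEquiv.piFinSuccAbove (fun _ : Fin (n + 1) => ℝ) 0
  have hem : MeasurePreserving e.symm :=
    (volume_preserving_piFinSuccAbove (fun _ : Fin (n + 1) => ℝ) 0).symm _
  have he : ∀ x : ℝ × (Fin n → ℝ), e.symm x = Fin.cons x.1 x.2 := by
    intro x
    exact Fin.insertNth_zero (α := fun _ : Fin (n + 1) => ℝ) x.1 x.2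
  have hinteg : IntegrableOn (fun τ : Fin (n + 1) → ℝ =>
      ∏ k, f ((Fin.snoc τ (t - ∑ i, τ i) : Fin (n + 2) → ℝ) k)) (openSimplex (n + 1) t) :=
    ((continuous_simplex_integrand hf (n + 1) t).continuousOn.integrableOn_compact
      isCompact_Icc).mono_set (openSimplex_subset_Icc _ _)
  have hmem : ∀ (s : ℝ) (τ : Fin n → ℝ), (Fin.cons s τ : Fin (n + 1) → ℝ) ∈ openSimplex (n + 1) t ↔
      0 < s ∧ τ ∈ openSimplex n (t - s) := by
    intro s τ
    simp only [openSimplex, Set.mem_ofPred_eq, Fin.forall_fin_succ, Fin.cons_zero, Fin.cons_succ,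
      Fin.sum_univ_succ, and_assoc, lt_sub_iff_add_lt']
  have hval : ∀ (s : ℝ) (τ : Fin n → ℝ),
      ∏ k, f ((Fin.snoc (Fin.cons s τ : Fin (n + 1) → ℝ)
        (t - ∑ i, (Fin.cons s τ : Fin (n + 1) → ℝ) i) : Fin (n + 2) → ℝ) k) =
      f s * ∏ k, f ((Fin.snoc τ (t - s - ∑ i, τ i) : Fin (n + 1) → ℝ) k) := by
    intro s τ
    rw [← Fin.cons_snoc_eq_snoc_cons, Fin.prod_univ_succ]
    simp only [Fin.cons_zero, Fin.cons_succ, Fin.sum_univ_succ, sub_add_eq_sub_sub]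
  have hms := measurableSet_openSimplex (n + 1) t
  rw [← integrable_indicator_iff hms, ← hem.integrable_comp_emb e.symm.measurableEmbedding] at hinteg
  have hinteg' : Integrable (fun x => (openSimplex (n + 1) t).indicator (fun τ : Fin (n + 1) → ℝ =>
      ∏ k, f ((Fin.snoc τ (t - ∑ i, τ i) : Fin (n + 2) → ℝ) k)) (e.symm x))
      ((volume : Measure ℝ).prod (volume : Measure (Fin n → ℝ))) := hinteg
  unfold simplexInt
  rw [← integral_indicator hms, ← hem.integral_comp e.symm.measurableEmbedding,
    Measure.volume_eq_prod, integral_prod _ hinteg', intervalIntegral.integral_of_le ht.le,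
    ← integral_indicator measurableSet_Ioc]
  refine integral_congr_ae (Filter.Eventually.of_forall fun s => ?_)
  simp only [he]
  by_cases hs : s ∈ Set.Ioc 0 t
  · rw [Set.indicator_of_mem hs, ← integral_const_mul,
      ← integral_indicator (measurableSet_openSimplex _ _)]
    refine integral_congr_ae (Filter.Eventually.of_forall fun τ => ?_)
    by_cases hτ : τ ∈ openSimplex n (t - s)
    · simp only [Set.indicator_of_mem hτ, Set.indicator_of_mem ((hmem s τ).mpr ⟨hs.1, hτ⟩), hval]
    · simp only [Set.indicator_of_notMem hτ,
        Set.indicator_of_notMem (fun h => hτ ((hmem s τ).mp h).2)]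
  · rw [Set.indicator_of_notMem hs]
    refine integral_eq_zero_of_ae (Filter.Eventually.of_forall fun τ => ?_)
    refine Set.indicator_of_notMem (fun h => hs ?_) _
    obtain ⟨h0, h1, h2⟩ := (hmem s τ).mp h
    exact ⟨h0, by linarith [sum_nonneg fun i (_ : i ∈ univ) => (h1 i).le]⟩

/-! ### Powers of the symbol and Bessel functions -/

theorem Gamma_add_natCast {a : ℝ} (ha : 0 < a) (i : ℕ) :
    Real.Gamma (a + i) = Real.Gamma a * (ascPochhammer ℝ i).eval a := by
  induction i with
  | zero => simp
  | succ i ih =>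
    rw [ascPochhammer_succ_eval, Nat.cast_succ, ← add_assoc,
      Real.Gamma_add_one (by positivity), ih]
    ring

theorem choose_neg_eq_Gamma {a : ℝ} (ha : 0 < a) (i : ℕ) :
    Ring.choose (-a) i = (-1) ^ i * (Real.Gamma (a + i) / (Real.Gamma a * i.factorial)) := by
  have hG := (Real.Gamma_pos_of_pos ha).ne'
  have h := Ring.factorial_nsmul_multichoose_eq_ascPochhammer a i
  rw [Polynomial.ascPochhammer_smeval_eq_eval, nsmul_eq_mul] at h
  rw [Ring.choose_neg', Gamma_add_natCast ha, ← h]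
  have hf : (i.factorial : ℝ) ≠ 0 := by positivity
  rw [show Real.Gamma a * (i.factorial * Ring.multichoose a i) / (Real.Gamma a * i.factorial)
    = Ring.multichoose a i by field_simp, Units.smul_def, zsmul_eq_mul]
  simp [Int.negOnePow_def]

theorem abs_choose_neg_le_one {a : ℝ} (ha : 0 < a) (ha1 : a ≤ 1) (i : ℕ) :
    |Ring.choose (-a) i| ≤ 1 := by
  have hG := Real.Gamma_pos_of_pos ha
  rw [choose_neg_eq_Gamma ha, abs_mul, abs_pow, abs_neg, abs_one, one_pow, one_mul]
  have hi : 0 < a + i := by positivity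
  rw [abs_of_nonneg (by have := Real.Gamma_pos_of_pos hi; positivity), div_le_one (by positivity)]
  clear hi
  induction i with
  | zero => simp
  | succ i ih =>
    rw [Nat.cast_succ, ← add_assoc, Real.Gamma_add_one (by positivity), Nat.factorial_succ]
    push_cast
    calc (a + i) * Real.Gamma (a + i) ≤ (i + 1) * (Real.Gamma a * i.factorial) := by
          gcongr ?_ * ?_
          linarith
      _ = _ := by ring

open PowerSeries in
/-- The expansion `X ^ k (1 + b² X²) ^ (-k/2)` of `(p² + b²) ^ (-k/2)` in `X = 1/p`. -/
noncomputable def symbolPow (b : ℝ) (k : ℕ) : PowerSeries ℝ :=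
  X ^ k * expand 2 two_ne_zero (rescale (b ^ 2) (binomialSeries ℝ (-((k : ℝ) / 2))))

section
open PowerSeries

theorem symbolPow_add (b : ℝ) (k l : ℕ) :
    symbolPow b (k + l) = symbolPow b k * symbolPow b l := by
  unfold symbolPow
  rw [show -(((k + l : ℕ) : ℝ) / 2) = -((k : ℝ) / 2) + -((l : ℝ) / 2) by push_cast; ring,
    binomialSeries_add, map_mul, map_mul, pow_add]
  ring

theorem symbolPow_zero (b : ℝ) : symbolPow b 0 = 1 := by
  simp [symbolPow]

theorem symbolPow_mul (b : ℝ) (k l : ℕ) : symbolPow b (k * l) = symbolPow b k ^ l := by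
  induction l with
  | zero => simp [symbolPow_zero]
  | succ l ih => rw [Nat.mul_succ, symbolPow_add, ih, pow_succ]

theorem coeff_symbolPow (b : ℝ) (k i : ℕ) :
    coeff (k + 2 * i) (symbolPow b k) = (b ^ 2) ^ i * Ring.choose (-((k : ℝ) / 2)) i := by
  rw [symbolPow, add_comm k, coeff_X_pow_mul, coeff_expand_mul, coeff_rescale,
    binomialSeries_coeff, smul_eq_mul, mul_one]

theorem coeff_symbolPow_eq_zero (b : ℝ) {k m : ℕ} (h : ∀ i, m ≠ k + 2 * i) :
    coeff m (symbolPow b k) = 0 := by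
  rw [symbolPow, coeff_X_pow_mul']
  split_ifs with hkm
  · refine coeff_expand_of_not_dvd 2 _ _ ?_
    rintro ⟨i, hi⟩
    exact h i (by omega)
  · rfl

end

/-- All cases reduce to `k = 1`, where the binomial coefficients of `-1/2` are at most `1` in absolute
value. -/
theorem geomBdd_symbolPow (b : ℝ) (k : ℕ) : GeomBdd (symbolPow b k) := by
  suffices h : GeomBdd (symbolPow b 1) by
    have := h.pow k
    rwa [← symbolPow_mul, one_mul] at this
  have hb : 1 ≤ max 1 |b| := le_max_left _ _
  refine ⟨1, max 1 |b|, zero_le_one, hb, fun m => ?_⟩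
  rw [one_mul]
  by_cases h : ∃ i, m = 1 + 2 * i
  · obtain ⟨i, rfl⟩ := h
    rw [coeff_symbolPow, abs_mul, ← pow_mul, abs_pow]
    calc |b| ^ (2 * i) * |Ring.choose (-(((1 : ℕ) : ℝ) / 2)) i| ≤ |b| ^ (2 * i) * 1 := by
          gcongr
          exact abs_choose_neg_le_one (by norm_num) (by norm_num) i
      _ ≤ max 1 |b| ^ (2 * i) := by
          rw [mul_one]
          gcongr
          exact le_max_right _ _
      _ ≤ _ := pow_le_pow_right₀ hb (by omega)
  · rw [coeff_symbolPow_eq_zero b (not_exists.mp h), abs_zero]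
    positivity

theorem invLaplace_symbolPow_succ (b : ℝ) (m : ℕ) (t : ℝ) :
    invLaplace (symbolPow b (m + 1)) t =
      ∑' i : ℕ, (b ^ 2) ^ i * Ring.choose (-(((m + 1 : ℕ) : ℝ) / 2)) i *
        (t ^ (m + 2 * i) / (m + 2 * i).factorial) := by
  have hinj : Function.Injective fun i : ℕ => m + 2 * i := fun i j h => by
    simp only at h; omega
  unfold invLaplace
  rw [← hinj.tsum_eq]
  · refine tsum_congr fun i => ?_
    rw [← coeff_symbolPow, show m + 2 * i + 1 = m + 1 + 2 * i by ring]
  · intro j hj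
    by_contra hcon
    refine hj ?_
    simp only
    rw [coeff_symbolPow_eq_zero, zero_mul]
    intro i hi
    exact hcon ⟨i, by simp only; omega⟩

/-- Legendre's duplication formula at half-integers. -/
theorem sqrt_pi_mul_factorial (m : ℕ) :
    √Real.pi * m.factorial =
      2 ^ m * (Real.Gamma (((m + 1 : ℕ) : ℝ) / 2) * Real.Gamma ((m : ℝ) / 2 + 1)) := by
  have h := Real.Gamma_mul_Gamma_add_half (((m + 1 : ℕ) : ℝ) / 2)
  rw [show ((m + 1 : ℕ) : ℝ) / 2 + 1 / 2 = (m : ℝ) / 2 + 1 by push_cast; ring,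
    show 2 * (((m + 1 : ℕ) : ℝ) / 2) = m + 1 by push_cast; ring, Real.Gamma_nat_eq_factorial,
    show (1 : ℝ) - (m + 1) = -(m : ℝ) by ring, Real.rpow_neg two_pos.le, Real.rpow_natCast] at h
  rw [h]
  field_simp

/-- The transform of `t ^ ν J_ν(bt)`, for `ν = m / 2`, is a multiple of `(p² + b²) ^ (-(m + 1)/2)`. -/
theorem besselJ_half_eq_invLaplace {b t : ℝ} (hb : 0 < b) (ht : 0 < t) (m : ℕ) :
    (t / (2 * b)) ^ ((m : ℝ) / 2) * besselJ ((m : ℝ) / 2) (b * t) =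
      Real.Gamma (((m + 1 : ℕ) : ℝ) / 2) / √Real.pi * invLaplace (symbolPow b (m + 1)) t := by
  rw [invLaplace_symbolPow_succ, besselJ, ← tsum_mul_left, ← tsum_mul_left]
  refine tsum_congr fun i => ?_
  have ha : (0 : ℝ) < ((m + 1 : ℕ) : ℝ) / 2 := by positivity
  have hpow : (t / (2 * b)) ^ ((m : ℝ) / 2) * (b * t / 2) ^ (2 * (i : ℝ) + (m : ℝ) / 2) =
      (t / 2) ^ m * (b * t / 2) ^ (2 * i) := by
    rw [Real.rpow_add (by positivity), mul_left_comm, ← Real.mul_rpow (by positivity)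
      (by positivity), show t / (2 * b) * (b * t / 2) = (t / 2) ^ 2 by field_simp; try ring,
      ← Real.rpow_natCast (t / 2) 2, ← Real.rpow_mul (by positivity),
      show ((2 : ℕ) : ℝ) * ((m : ℝ) / 2) = m by push_cast; ring, Real.rpow_natCast,
      show 2 * (i : ℝ) = ((2 * i : ℕ) : ℝ) by push_cast; ring, Real.rpow_natCast, mul_comm]
  have hdup := sqrt_pi_mul_factorial (m + 2 * i)
  rw [show ((m + 2 * i + 1 : ℕ) : ℝ) / 2 = ((m + 1 : ℕ) : ℝ) / 2 + i by push_cast; ring,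
    show ((m + 2 * i : ℕ) : ℝ) / 2 + 1 = i + (m : ℝ) / 2 + 1 by push_cast; ring] at hdup
  rw [choose_neg_eq_Gamma ha, mul_left_comm, hpow]
  have h1 := (Real.Gamma_pos_of_pos ha).ne'
  have h2 : Real.Gamma (i + (m : ℝ) / 2 + 1) ≠ 0 :=
    (Real.Gamma_pos_of_pos (by positivity)).ne'
  have h3 : √Real.pi ≠ 0 := (Real.sqrt_pos.mpr Real.pi_pos).ne'
  have h4 : ((m + 2 * i).factorial : ℝ) ≠ 0 := by positivity
  have h5 : (i.factorial : ℝ) ≠ 0 := by positivity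
  generalize Real.Gamma (i + (m : ℝ) / 2 + 1) = G2 at *
  generalize Real.Gamma (((m + 1 : ℕ) : ℝ) / 2 + i) = G3 at *
  generalize Real.Gamma (((m + 1 : ℕ) : ℝ) / 2) = G1 at *
  generalize ((m + 2 * i).factorial : ℝ) = F at *
  generalize √Real.pi = S at *
  have hx : (t / 2) ^ m * (b * t / 2) ^ (2 * i) * 2 ^ (m + 2 * i) =
      (b ^ 2) ^ i * t ^ (m + 2 * i) := by
    rw [pow_add, pow_add, ← pow_mul, div_pow, div_pow, mul_pow]
    field_simp
  have hG : G3 / (S * F) = 1 / (2 ^ (m + 2 * i) * G2) := by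
    have : S * F ≠ 0 := mul_ne_zero h3 h4
    rw [div_eq_div_iff this (by positivity), hdup]; ring
  calc _ = (-1) ^ i / i.factorial * ((t / 2) ^ m * (b * t / 2) ^ (2 * i) * 2 ^ (m + 2 * i)) *
        (1 / (2 ^ (m + 2 * i) * G2)) := by field_simp
    _ = (-1) ^ i / i.factorial * ((b ^ 2) ^ i * t ^ (m + 2 * i)) * (G3 / (S * F)) := by
        rw [hx, hG]
    _ = _ := by field_simp

/-- The form of `besselJ_half_eq_invLaplace` that fits all Bessel quotients of the statement: the order
is `(p + q) / 2` and the exponent in the denominator is `(q - p) / 2`. -/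
theorem pow_mul_besselJ_div {b t : ℝ} (hb : 0 < b) (ht : 0 < t) (p q : ℕ) {ν μ : ℝ}
    (hν : ν = ((p : ℝ) + q) / 2) (hμ : μ = ((q : ℝ) - p) / 2) :
    t ^ q * (besselJ ν (b * t) / (b * t) ^ μ) =
      Real.Gamma (((p + q + 1 : ℕ) : ℝ) / 2) / √Real.pi * 2 ^ ν * b ^ p *
        invLaplace (symbolPow b (p + q + 1)) t := by
  have h := besselJ_half_eq_invLaplace hb ht (p + q)
  rw [show ((p + q : ℕ) : ℝ) / 2 = ν by rw [hν]; push_cast; ring] at h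
  have hk : (t / (2 * b)) ^ ν * (2 ^ ν * b ^ p * (b * t) ^ μ) = t ^ q := by
    rw [Real.div_rpow ht.le (by positivity), Real.mul_rpow two_pos.le hb.le,
      Real.mul_rpow hb.le ht.le, ← Real.rpow_natCast, ← Real.rpow_natCast,
      show (q : ℝ) = ν + μ by rw [hν, hμ]; ring, Real.rpow_add ht,
      show (p : ℝ) = ν - μ by rw [hν, hμ]; ring, Real.rpow_sub hb]
    field_simp
  have hne : (b * t) ^ μ ≠ 0 := (Real.rpow_pos_of_pos (by positivity) _).ne'
  calc _ = (t / (2 * b)) ^ ν * besselJ ν (b * t) * (2 ^ ν * b ^ p) := by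
        rw [← hk]; field_simp
    _ = _ := by rw [h]; ring

/-- The simplex integral of `invLaplace v` is the inverse transform of the power `v ^ (n + 1)`. -/
theorem simplexInt_invLaplace {v : PowerSeries ℝ} (hv : GeomBdd v)
    (hv0 : PowerSeries.constantCoeff v = 0) (n : ℕ) {t : ℝ} (ht : 0 < t) :
    simplexInt (invLaplace v) n t = invLaplace (v ^ (n + 1)) t := by
  induction n generalizing t with
  | zero => rw [simplexInt_zero _ ht, zero_add, pow_one]
  | succ n ih =>
    rw [simplexInt_succ hv.continuous_invLaplace n ht, pow_succ' v (n + 1),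
      ← convolution_invLaplace hv (hv.pow (n + 1)) hv0 (by simp [hv0]) ht.le]
    -- At `s = t` the inner simplex is empty, so the integrands agree only on the open interval.
    refine intervalIntegral.integral_congr_Ioo_of_le ht.le fun s hs => ?_
    rw [ih (by linarith [hs.2])]

theorem stmt14 (d n : ℕ) (hd : 2 ≤ d) (hn : 1 ≤ n) (c t : ℝ) (hc : 0 < c) (ht : 0 < t)
    (α : EuclideanSpace ℝ (Fin d)) (hα : α ≠ 0) :
    Real.Gamma (((n : ℝ) + 1) * ((d : ℝ) + 1)) /
        (Real.Gamma ((d : ℝ) + 1) ^ (n + 1) * t ^ ((n + 1) * (d + 1) - 1)) *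
      ((2 : ℝ) ^ ((d : ℝ) / 2) * Real.Gamma (1 + (d : ℝ) / 2)) ^ (n + 1) *
      (∫ τ in {τ : Fin n → ℝ | (∀ i, 0 < τ i) ∧ ∑ i, τ i < t},
        (let σ : Fin (n + 1) → ℝ := Fin.snoc τ (t - ∑ i, τ i)
         ∏ k : Fin (n + 1),
          σ k ^ d *
            (besselJ ((d : ℝ) / 2) (c * σ k * ‖α‖) / (c * σ k * ‖α‖) ^ ((d : ℝ) / 2) -
              α ⟨d - 1, by omega⟩ ^ 2 / ‖α‖ ^ 2 *
                (besselJ ((d : ℝ) / 2 + 1) (c * σ k * ‖α‖) /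
                  (c * σ k * ‖α‖) ^ ((d : ℝ) / 2 - 1)))))
    = Real.sqrt Real.pi * Real.Gamma (((n : ℝ) + 1) * ((d : ℝ) + 1)) /
        (2 : ℝ) ^ ((((d : ℝ) + 1) * ((n : ℝ) + 1) - 1) / 2) *
      ∑ j ∈ Finset.range (n + 2),
        (-1 : ℝ) ^ (n + 1 - j) * ((n + 1).choose j : ℝ) *
          (α ⟨d - 1, by omega⟩ ^ 2 / ‖α‖ ^ 2 * (((d : ℝ) + 1) / 2)) ^ (n + 1 - j) /
            Real.Gamma (((n : ℝ) + 1) * ((d : ℝ) + 3) / 2 - (j : ℝ)) *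
          (besselJ ((((n : ℝ) + 1) * ((d : ℝ) + 3) - (2 * (j : ℝ) + 1)) / 2) (c * t * ‖α‖) /
            (c * t * ‖α‖) ^ ((((n : ℝ) + 1) * ((d : ℝ) - 1) + 2 * (j : ℝ) - 1) / 2)) := by
  set a : ℝ := α ⟨d - 1, by omega⟩ ^ 2 / ‖α‖ ^ 2
  obtain ⟨b, hbdef⟩ : ∃ b, b = c * ‖α‖ := ⟨_, rfl⟩
  have hb : 0 < b := hbdef ▸ mul_pos hc (norm_pos_iff.mpr hα)
  have harg : ∀ x : ℝ, c * x * ‖α‖ = b * x := fun x => by rw [hbdef]; ring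
  simp only [harg]
  clear_value a
  clear harg hbdef hα hn
  -- `v` is the transform of the one-step factor; `B` uses `2 Γ((d+3)/2) = (d+1) Γ((d+1)/2)`.
  obtain ⟨A, hA⟩ : ∃ A, A = Real.Gamma (((d + 1 : ℕ) : ℝ) / 2) / √Real.pi * 2 ^ ((d : ℝ) / 2) :=
    ⟨_, rfl⟩
  obtain ⟨B, hB⟩ : ∃ B, B = -(a * b ^ 2 * (d + 1)) := ⟨_, rfl⟩
  let v : PowerSeries ℝ := PowerSeries.C A * (symbolPow b (d + 1) +
    PowerSeries.C B * symbolPow b (d + 3))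
  have hg1 := geomBdd_symbolPow b (d + 1)
  have hg3 := (geomBdd_symbolPow b (d + 3)).C_mul B
  have hv : GeomBdd v := (hg1.add hg3).C_mul A
  have hv0 : PowerSeries.constantCoeff v = 0 := by
    simp [v, symbolPow]
  have hstep : ∀ x : ℝ, 0 < x →
      x ^ d * (besselJ ((d : ℝ) / 2) (b * x) / (b * x) ^ ((d : ℝ) / 2) -
        a * (besselJ ((d : ℝ) / 2 + 1) (b * x) / (b * x) ^ ((d : ℝ) / 2 - 1))) =
      invLaplace v x := by
    intro x hx
    have e1 := pow_mul_besselJ_div hb hx 0 d (ν := (d : ℝ) / 2) (μ := (d : ℝ) / 2)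
      (by push_cast; ring) (by push_cast; ring)
    have e2 := pow_mul_besselJ_div hb hx 2 d (ν := (d : ℝ) / 2 + 1) (μ := (d : ℝ) / 2 - 1)
      (by push_cast; ring) (by push_cast; ring)
    rw [zero_add] at e1
    rw [show 2 + d + 1 = d + 3 by ring,
      show ((d + 3 : ℕ) : ℝ) / 2 = ((d + 1 : ℕ) : ℝ) / 2 + 1 by push_cast; ring,
      Real.Gamma_add_one (by positivity), Real.rpow_add two_pos, Real.rpow_one] at e2
    rw [mul_sub, mul_left_comm, e1, e2, invLaplace_C_mul, hg1.invLaplace_add hg3,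
      invLaplace_C_mul, hA, hB]
    push_cast
    ring
  have hinteg : (∫ τ in {τ : Fin n → ℝ | (∀ i, 0 < τ i) ∧ ∑ i, τ i < t},
      (let σ : Fin (n + 1) → ℝ := Fin.snoc τ (t - ∑ i, τ i)
       ∏ k : Fin (n + 1), σ k ^ d *
        (besselJ ((d : ℝ) / 2) (b * σ k) / (b * σ k) ^ ((d : ℝ) / 2) -
          a * (besselJ ((d : ℝ) / 2 + 1) (b * σ k) / (b * σ k) ^ ((d : ℝ) / 2 - 1))))) =
      simplexInt (invLaplace v) n t := by
    refine setIntegral_congr_fun (measurableSet_openSimplex n t) ?_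
    rintro τ ⟨h0, h1⟩
    refine prod_congr rfl fun k _ => hstep _ ?_
    induction k using Fin.lastCases with
    | last => simpa using h1
    | cast i => simpa using h0 i
  rw [hinteg, simplexInt_invLaplace hv hv0 n ht]
  have hexp : invLaplace (v ^ (n + 1)) t = ∑ j ∈ Finset.range (n + 2),
      A ^ (n + 1) * B ^ (n + 1 - j) * ((n + 1).choose j : ℝ) *
        invLaplace (symbolPow b ((d + 1) * j + (d + 3) * (n + 1 - j))) t := by
    have : v ^ (n + 1) = ∑ j ∈ Finset.range (n + 2),
        PowerSeries.C (A ^ (n + 1) * B ^ (n + 1 - j) * ((n + 1).choose j : ℝ)) *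
          symbolPow b ((d + 1) * j + (d + 3) * (n + 1 - j)) := by
      rw [mul_pow, add_pow, mul_sum]
      refine sum_congr rfl fun j _ => ?_
      rw [symbolPow_add b ((d + 1) * j), symbolPow_mul, symbolPow_mul, mul_pow]
      simp only [map_mul, map_pow, map_natCast]
      ring
    rw [this, GeomBdd.invLaplace_sum _ _ fun j _ => (geomBdd_symbolPow _ _).C_mul _]
    exact sum_congr rfl fun j _ => invLaplace_C_mul _ _ _
  rw [hexp, mul_sum, mul_sum]
  refine sum_congr rfl fun j hj => ?_
  have hj' : j ≤ n + 1 := by have := mem_range.mp hj; omega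
  -- With `r = n + 1 - j`, the `j`-th Bessel order is `(2r + q)/2`, where `t ^ q` is the power of `t`
  -- in the Dirichlet normalization.
  obtain ⟨r, hr⟩ := Nat.exists_eq_add_of_le hj'
  have hr' : n + 1 - j = r := by omega
  have hrR : (n : ℝ) + 1 = j + r := by exact_mod_cast hr
  obtain ⟨q, hq⟩ : ∃ q, (n + 1) * (d + 1) = q + 1 := ⟨n * d + n + d, by ring⟩
  have hqR : ((n : ℝ) + 1) * (d + 1) = q + 1 := by exact_mod_cast hq
  -- Duplication formula: the angular normalization cancels `Γ(d + 1)`.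
  have hK : (2 : ℝ) ^ ((d : ℝ) / 2) * Real.Gamma (1 + (d : ℝ) / 2) * A = Real.Gamma ((d : ℝ) + 1) := by
    have h := sqrt_pi_mul_factorial d
    have h2 : (2 : ℝ) ^ ((d : ℝ) / 2) * 2 ^ ((d : ℝ) / 2) = 2 ^ d := by
      rw [← Real.rpow_add two_pos, add_halves, Real.rpow_natCast]
    have h3 : √Real.pi ≠ 0 := (Real.sqrt_pos.mpr Real.pi_pos).ne'
    rw [Real.Gamma_nat_eq_factorial, hA, add_comm 1 ((d : ℝ) / 2)]
    apply mul_left_cancel₀ h3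
    rw [h, ← h2]
    field_simp
  have hbes := pow_mul_besselJ_div hb ht (2 * r) q
    (ν := (((n : ℝ) + 1) * ((d : ℝ) + 3) - (2 * (j : ℝ) + 1)) / 2)
    (μ := (((n : ℝ) + 1) * ((d : ℝ) - 1) + 2 * (j : ℝ) - 1) / 2)
    (by push_cast; linear_combination (1 / 2) * hqR + hrR)
    (by push_cast; linear_combination (1 / 2) * hqR - hrR)
  have hidx : 2 * r + q + 1 = (d + 1) * j + (d + 3) * r := by
    rw [add_assoc, ← hq, hr]; ring
  have hG : Real.Gamma (((2 * r + q + 1 : ℕ) : ℝ) / 2) =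
      Real.Gamma (((n : ℝ) + 1) * ((d : ℝ) + 3) / 2 - (j : ℝ)) := by
    congr 1
    push_cast
    linear_combination (-1 / 2) * hqR - hrR
  have hpow : (2 : ℝ) ^ ((((n : ℝ) + 1) * ((d : ℝ) + 3) - (2 * (j : ℝ) + 1)) / 2) =
      2 ^ ((((d : ℝ) + 1) * ((n : ℝ) + 1) - 1) / 2) * 2 ^ r := by
    rw [← Real.rpow_natCast, ← Real.rpow_add two_pos]
    congr 1
    linear_combination hrR
  rw [hG, hpow, hidx] at hbes
  rw [hr', hq, Nat.add_sub_cancel]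
  have hGpos : 0 < Real.Gamma (((n : ℝ) + 1) * ((d : ℝ) + 3) / 2 - (j : ℝ)) := by
    rw [← hG]; exact Real.Gamma_pos_of_pos (by positivity)
  have hGd : 0 < Real.Gamma ((d : ℝ) + 1) := Real.Gamma_pos_of_pos (by positivity)
  rw [mul_comm, ← eq_div_iff (by positivity)] at hbes
  rw [hbes]
  have hAN : ((2 : ℝ) ^ ((d : ℝ) / 2) * Real.Gamma (1 + (d : ℝ) / 2)) ^ (n + 1) * A ^ (n + 1) =
      Real.Gamma ((d : ℝ) + 1) ^ (n + 1) := by rw [← mul_pow, hK]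
  have hBr : B ^ r = (-1) ^ r * (a * ((d + 1) / 2)) ^ r * 2 ^ r * b ^ (2 * r) := by
    rw [pow_mul, ← mul_pow, ← mul_pow, ← mul_pow, hB]; congr 1; ring
  have h3 : √Real.pi ≠ 0 := (Real.sqrt_pos.mpr Real.pi_pos).ne'
  calc _ = Real.Gamma (((n : ℝ) + 1) * ((d : ℝ) + 1)) /
        (Real.Gamma ((d : ℝ) + 1) ^ (n + 1) * t ^ q) *
        (((2 : ℝ) ^ ((d : ℝ) / 2) * Real.Gamma (1 + (d : ℝ) / 2)) ^ (n + 1) * A ^ (n + 1)) *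
        B ^ r * ((n + 1).choose j : ℝ) *
        invLaplace (symbolPow b ((d + 1) * j + (d + 3) * r)) t := by ring
    _ = _ := by
      rw [hAN, hBr]
      generalize Real.Gamma (((n : ℝ) + 1) * ((d : ℝ) + 3) / 2 - (j : ℝ)) = G at *
      field_simp
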